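/- For a double complex of complex vector spaces and every bidegree (p,q), the sequence 0 → D^{p,q} → H_BC^{p,q} → H_∂̄^{p,q} → E^{p,q} → F^{p,q} → 0 is exact, where the first map is induced by the inclusion im ∂̄ ∩ ker ∂ ⊆ ker ∂ ∩ ker ∂̄, the second and third maps are induced by the identity on representatives, and the last map is the natural projection. -/

import Mathlib

open Submodule

/-- A double complex of complex vector spaces, presented as a bigraded direct-sum
decomposition `K p q` of an ambient space `V`, together with anticommuting
differentials `d1 = ∂` (of bidegree `(1,0)`) and `d2 = ∂̄` (of bidegree `(0,1)`). -/
structure DoubleComplex (V : Type*) [AddCommGroup V] [Module ℂ V] where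
  K : ℤ → ℤ → Submodule ℂ V
  isInternal : DirectSum.IsInternal fun pq : ℤ × ℤ => K pq.1 pq.2
  d1 : V →ₗ[ℂ] V
  d2 : V →ₗ[ℂ] V
  d1_mem : ∀ p q : ℤ, ∀ x ∈ K p q, d1 x ∈ K (p + 1) q
  d2_mem : ∀ p q : ℤ, ∀ x ∈ K p q, d2 x ∈ K p (q + 1)
  d1_d1 : d1 ∘ₗ d1 = 0
  d2_d2 : d2 ∘ₗ d2 = 0
  anticomm : d1 ∘ₗ d2 + d2 ∘ₗ d1 = 0

/-- The dimension (as a natural number) of the quotient of a submodule `M` of `V`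
by (the trace on `M` of) a submodule `N`. -/
noncomputable def qdim {V : Type*} [AddCommGroup V] [Module ℂ V]
    (M N : Submodule ℂ V) : ℕ :=
  Module.finrank ℂ (↥M ⧸ N.comap M.subtype)

/-- The linear map between quotients `M₁/N₁ → M₂/N₂` induced by the identity,
for `M₁ ≤ M₂` and `N₁ ≤ N₂`. -/
def quotMap {V : Type*} [AddCommGroup V] [Module ℂ V] {M₁ N₁ M₂ N₂ : Submodule ℂ V}
    (hM : M₁ ≤ M₂) (hN : N₁ ≤ N₂) :
    (↥M₁ ⧸ N₁.comap M₁.subtype) →ₗ[ℂ] (↥M₂ ⧸ N₂.comap M₂.subtype) :=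
  Submodule.mapQ _ _ (Submodule.inclusion hM) fun _ hx => hN hx

namespace DoubleComplex

variable {V : Type*} [AddCommGroup V] [Module ℂ V] (D : DoubleComplex V)

/-- A double complex is bounded if only finitely many components are non-zero. -/
def Bounded : Prop := Set.Finite {pq : ℤ × ℤ | D.K pq.1 pq.2 ≠ ⊥}

lemma d1_d1_apply (x : V) : D.d1 (D.d1 x) = 0 := by
  simpa using LinearMap.ext_iff.mp D.d1_d1 x

lemma d2_d2_apply (x : V) : D.d2 (D.d2 x) = 0 := by
  simpa using LinearMap.ext_iff.mp D.d2_d2 x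

lemma anticomm_apply (x : V) : D.d1 (D.d2 x) + D.d2 (D.d1 x) = 0 := by
  simpa using LinearMap.ext_iff.mp D.anticomm x

/-- Numerator `ker ∂̄ ∩ K^{p,q}` of the Dolbeault cohomology. -/
def dolN (p q : ℤ) : Submodule ℂ V := LinearMap.ker D.d2 ⊓ D.K p q
/-- Denominator `∂̄ K^{p,q-1}` of the Dolbeault cohomology. -/
def dolD (p q : ℤ) : Submodule ℂ V := (D.K p (q - 1)).map D.d2
/-- Numerator `ker ∂ ∩ K^{p,q}` of the conjugate Dolbeault cohomology. -/
def conjN (p q : ℤ) : Submodule ℂ V := LinearMap.ker D.d1 ⊓ D.K p q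
/-- Denominator `∂ K^{p-1,q}` of the conjugate Dolbeault cohomology. -/
def conjD (p q : ℤ) : Submodule ℂ V := (D.K (p - 1) q).map D.d1
/-- Numerator `ker ∂ ∩ ker ∂̄ ∩ K^{p,q}` of the Bott-Chern cohomology. -/
def bcN (p q : ℤ) : Submodule ℂ V := LinearMap.ker D.d1 ⊓ LinearMap.ker D.d2 ⊓ D.K p q
/-- Denominator `∂∂̄ K^{p-1,q-1}` of the Bott-Chern cohomology. -/
def bcD (p q : ℤ) : Submodule ℂ V := (D.K (p - 1) (q - 1)).map (D.d1 ∘ₗ D.d2)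
/-- Numerator `ker ∂∂̄ ∩ K^{p,q}` of the Aeppli cohomology. -/
def aeN (p q : ℤ) : Submodule ℂ V := LinearMap.ker (D.d1 ∘ₗ D.d2) ⊓ D.K p q
/-- Denominator `∂ K^{p-1,q} + ∂̄ K^{p,q-1}` of the Aeppli cohomology. -/
def aeD (p q : ℤ) : Submodule ℂ V := (D.K (p - 1) q).map D.d1 ⊔ (D.K p (q - 1)).map D.d2

/-- The degree-`k` part `Tot^k = ⊕_{p+q=k} K^{p,q}` of the total complex. -/
def Tot (k : ℤ) : Submodule ℂ V := ⨆ p : ℤ, D.K p (k - p)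
/-- The total differential `d = ∂ + ∂̄`. -/
def dT : V →ₗ[ℂ] V := D.d1 + D.d2
/-- Numerator `ker d ∩ Tot^k` of the de Rham cohomology of the total complex. -/
def dRN (k : ℤ) : Submodule ℂ V := LinearMap.ker D.dT ⊓ D.Tot k
/-- Denominator `d (Tot^{k-1})` of the de Rham cohomology of the total complex. -/
def dRD (k : ℤ) : Submodule ℂ V := (D.Tot (k - 1)).map D.dT

/-- Hodge number `h_∂̄^{p,q}`. -/
noncomputable def hDol (p q : ℤ) : ℕ := qdim (D.dolN p q) (D.dolD p q)
/-- Conjugate Hodge number `h_∂^{p,q}`. -/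
noncomputable def hConj (p q : ℤ) : ℕ := qdim (D.conjN p q) (D.conjD p q)
/-- Bott-Chern number `h_BC^{p,q}`. -/
noncomputable def hBC (p q : ℤ) : ℕ := qdim (D.bcN p q) (D.bcD p q)
/-- Aeppli number `h_A^{p,q}`. -/
noncomputable def hAe (p q : ℤ) : ℕ := qdim (D.aeN p q) (D.aeD p q)
/-- Betti number `b_k` of the total complex. -/
noncomputable def b (k : ℤ) : ℕ := qdim (D.dRN k) (D.dRD k)

/-- The `∂∂̄`-lemma property:
`ker ∂ ∩ ker ∂̄ ∩ (im ∂ + im ∂̄) ∩ K^{p,q} = ∂∂̄ K^{p-1,q-1}` for every `(p,q)`. -/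
def SatisfiesDdbarLemma : Prop :=
  ∀ p q : ℤ,
    LinearMap.ker D.d1 ⊓ LinearMap.ker D.d2 ⊓ (D.conjD p q ⊔ D.dolD p q) ⊓ D.K p q =
      D.bcD p q

end DoubleComplex

namespace DoubleComplex

variable {V : Type*} [AddCommGroup V] [Module ℂ V] (D : DoubleComplex V)

lemma dolD_le_ker (p q : ℤ) : D.dolD p q ≤ LinearMap.ker D.d2 := by
  rintro x ⟨y, -, rfl⟩
  exact LinearMap.mem_ker.mpr (D.d2_d2_apply y)

lemma dolD_le_K (p q : ℤ) : D.dolD p q ≤ D.K p q := by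
  rintro x ⟨y, hy, rfl⟩
  have h := D.d2_mem p (q - 1) y hy
  rwa [show q - 1 + 1 = q by ring] at h

lemma conjD_le_ker (p q : ℤ) : D.conjD p q ≤ LinearMap.ker D.d1 := by
  rintro x ⟨y, -, rfl⟩
  exact LinearMap.mem_ker.mpr (D.d1_d1_apply y)

lemma conjD_le_K (p q : ℤ) : D.conjD p q ≤ D.K p q := by
  rintro x ⟨y, hy, rfl⟩
  have h := D.d1_mem (p - 1) q y hy
  rwa [show p - 1 + 1 = p by ring] at h

lemma ker_d2_le_ker_comp : LinearMap.ker D.d2 ≤ LinearMap.ker (D.d1 ∘ₗ D.d2) := by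
  intro x hx
  have hx' : D.d2 x = 0 := hx
  simp only [LinearMap.mem_ker, LinearMap.comp_apply, hx', map_zero]

lemma ker_d1_le_ker_comp : LinearMap.ker D.d1 ≤ LinearMap.ker (D.d1 ∘ₗ D.d2) := by
  intro x hx
  have hx' : D.d1 x = 0 := hx
  have h := D.anticomm_apply x
  rw [hx', map_zero, add_zero] at h
  exact LinearMap.mem_ker.mpr h

lemma bcD_le_dolD (p q : ℤ) : D.bcD p q ≤ D.dolD p q := by
  rintro x ⟨y, hy, rfl⟩
  refine ⟨-(D.d1 y), neg_mem ?_, ?_⟩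
  · have h := D.d1_mem (p - 1) (q - 1) y hy
    rwa [show p - 1 + 1 = p by ring] at h
  · rw [map_neg, LinearMap.comp_apply]
    exact neg_eq_of_add_eq_zero_left (D.anticomm_apply y)

lemma bcD_le_conjD (p q : ℤ) : D.bcD p q ≤ D.conjD p q := by
  rintro x ⟨y, hy, rfl⟩
  refine ⟨D.d2 y, ?_, rfl⟩
  have h := D.d2_mem (p - 1) (q - 1) y hy
  rwa [show q - 1 + 1 = q by ring] at h

end DoubleComplex

namespace DoubleComplex

variable {V : Type*} [AddCommGroup V] [Module ℂ V] (D : DoubleComplex V)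

/-- Numerator `im ∂̄ ∩ ker ∂ ∩ K^{p,q}` of the Varouchas space
`D^{p,q} = (im ∂̄ ∩ ker ∂)/im ∂∂̄`. -/
def varDN (p q : ℤ) : Submodule ℂ V := D.dolD p q ⊓ LinearMap.ker D.d1

/-- Denominator `(ker ∂ + im ∂̄) ∩ K^{p,q}` of the Varouchas space
`E^{p,q} = ker ∂∂̄/(ker ∂ + im ∂̄)`. -/
def varED (p q : ℤ) : Submodule ℂ V := (LinearMap.ker D.d1 ⊓ D.K p q) ⊔ D.dolD p q

/-- Denominator `(ker ∂̄ + ker ∂) ∩ K^{p,q}` of the Varouchas space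
`F^{p,q} = ker ∂∂̄/(ker ∂̄ + ker ∂)`. -/
def varFD (p q : ℤ) : Submodule ℂ V :=
  (LinearMap.ker D.d2 ⊓ D.K p q) ⊔ (LinearMap.ker D.d1 ⊓ D.K p q)

/-- The map `D^{p,q} → H_BC^{p,q}` induced by the inclusion
`im ∂̄ ∩ ker ∂ ⊆ ker ∂ ∩ ker ∂̄`. -/
def mapDBC (p q : ℤ) :
    (↥(D.varDN p q) ⧸ (D.bcD p q).comap (D.varDN p q).subtype) →ₗ[ℂ]
    (↥(D.bcN p q) ⧸ (D.bcD p q).comap (D.bcN p q).subtype) :=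
  quotMap
    (le_inf (le_inf inf_le_right (inf_le_left.trans (D.dolD_le_ker p q)))
      (inf_le_left.trans (D.dolD_le_K p q)))
    le_rfl

/-- The map `H_BC^{p,q} → H_∂̄^{p,q}` induced by the identity on representatives. -/
def mapBCDol (p q : ℤ) :
    (↥(D.bcN p q) ⧸ (D.bcD p q).comap (D.bcN p q).subtype) →ₗ[ℂ]
    (↥(D.dolN p q) ⧸ (D.dolD p q).comap (D.dolN p q).subtype) :=
  quotMap (le_inf (inf_le_left.trans inf_le_right) inf_le_right) (D.bcD_le_dolD p q)

/-- The map `H_∂̄^{p,q} → E^{p,q}` induced by the identity on representatives. -/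
def mapDolE (p q : ℤ) :
    (↥(D.dolN p q) ⧸ (D.dolD p q).comap (D.dolN p q).subtype) →ₗ[ℂ]
    (↥(D.aeN p q) ⧸ (D.varED p q).comap (D.aeN p q).subtype) :=
  quotMap (inf_le_inf_right (D.K p q) D.ker_d2_le_ker_comp) le_sup_right

/-- The natural projection `E^{p,q} → F^{p,q}`. -/
def mapEF (p q : ℤ) :
    (↥(D.aeN p q) ⧸ (D.varED p q).comap (D.aeN p q).subtype) →ₗ[ℂ]
    (↥(D.aeN p q) ⧸ (D.varFD p q).comap (D.aeN p q).subtype) :=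
  quotMap le_rfl
    (sup_le le_sup_right
      ((le_inf (D.dolD_le_ker p q) (D.dolD_le_K p q)).trans le_sup_left))

end DoubleComplex

lemma quotMap_exact {V : Type*} [AddCommGroup V] [Module ℂ V]
    {M₁ N₁ M₂ N₂ M₃ N₃ : Submodule ℂ V}
    (hM : M₁ ≤ M₂) (hN : N₁ ≤ N₂) (hM' : M₂ ≤ M₃) (hN' : N₂ ≤ N₃)
    (h0 : M₁ ≤ N₃) (h : ∀ x ∈ M₂, x ∈ N₃ → ∃ y ∈ M₁, y - x ∈ N₂) :
    LinearMap.range (quotMap hM hN) = LinearMap.ker (quotMap hM' hN') := by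
  apply le_antisymm
  · rintro _ ⟨x, rfl⟩
    obtain ⟨x, rfl⟩ := Submodule.Quotient.mk_surjective _ x
    exact (Submodule.Quotient.mk_eq_zero _).mpr (h0 x.2)
  · intro x hx
    obtain ⟨x, rfl⟩ := Submodule.Quotient.mk_surjective _ x
    have hx' := (Submodule.Quotient.mk_eq_zero _).mp hx
    obtain ⟨y, hy, hyx⟩ := h x.1 x.2 hx'
    exact ⟨Submodule.Quotient.mk ⟨y, hy⟩, (Submodule.Quotient.eq _).mpr hyx⟩

open DoubleComplex in
/-- **Varouchas' second exact sequence.** For a double complex of complex vector spaces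
and every bidegree `(p,q)`, the sequence
`0 → D^{p,q} → H_BC^{p,q} → H_∂̄^{p,q} → E^{p,q} → F^{p,q} → 0`
is exact, where the maps are induced by the inclusion `im ∂̄ ∩ ker ∂ ⊆ ker ∂ ∩ ker ∂̄`,
by the identity on representatives, and by the natural projection. -/
theorem varouchas_second_exact_sequence {V : Type*} [AddCommGroup V] [Module ℂ V]
    (D : DoubleComplex V) (p q : ℤ) :
    Function.Injective (D.mapDBC p q) ∧
    LinearMap.range (D.mapDBC p q) = LinearMap.ker (D.mapBCDol p q) ∧
    LinearMap.range (D.mapBCDol p q) = LinearMap.ker (D.mapDolE p q) ∧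
    LinearMap.range (D.mapDolE p q) = LinearMap.ker (D.mapEF p q) ∧
    Function.Surjective (D.mapEF p q) := by
  refine ⟨?_, ?_, ?_, ?_, ?_⟩
  · rw [injective_iff_map_eq_zero]
    intro x hx
    obtain ⟨x, rfl⟩ := Submodule.Quotient.mk_surjective _ x
    have hx' := (Submodule.Quotient.mk_eq_zero _).mp hx
    exact (Submodule.Quotient.mk_eq_zero _).mpr hx'
  · apply quotMap_exact
    · exact inf_le_left
    · intro x hx hx'
      exact ⟨x, ⟨hx', hx.1.1⟩, by simp⟩
  · apply quotMap_exact
    · exact (le_inf (inf_le_left.trans inf_le_left) inf_le_right).trans le_sup_left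
    · intro x hx hx'
      obtain ⟨a, ha, b, hb, rfl⟩ := Submodule.mem_sup.mp hx'
      refine ⟨a, ⟨⟨ha.1, ?_⟩, ha.2⟩, ?_⟩
      · have h := sub_mem hx.1 (D.dolD_le_ker p q hb)
        simpa using h
      · simpa using hb
  · apply quotMap_exact
    · exact le_sup_left
    · intro x hx hx'
      obtain ⟨a, ha, b, hb, rfl⟩ := Submodule.mem_sup.mp hx'
      refine ⟨a, ha, ?_⟩
      have h : b ∈ D.varED p q := le_sup_left (a := LinearMap.ker D.d1 ⊓ D.K p q) hb
      simpa using h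
  · intro x
    obtain ⟨x, rfl⟩ := Submodule.Quotient.mk_surjective _ x
    exact ⟨Submodule.Quotient.mk x, rfl⟩
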